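/- If D ⊆ 𝒫 is weakly compact and X ∈ L^1_s(D), then the set of extreme measures 𝒳_D(X) is nonempty, i.e., there exists Q ∈ D with E_Q[X] = inf_{Q'∈D} E_{Q'}[X] ∈ (−∞, ∞). -/

import Mathlib

open MeasureTheory Filter Set
open scoped ENNReal

variable {Ω : Type*} [MeasurableSpace Ω]

/-- Densities of probability measures absolutely continuous w.r.t. `P`. -/
def Dens (P : Measure Ω) : Set (Ω → ℝ) :=
  {Z | Measurable Z ∧ (∀ ω, 0 ≤ Z ω) ∧ ∫⁻ ω, ENNReal.ofReal (Z ω) ∂P = 1}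

/-- `E_Q[X] = E_Q[X⁺] − E_Q[X⁻]` with the convention `∞ − ∞ = −∞`, where `dQ/dP = Z`. -/
noncomputable def eexp (P : Measure Ω) (Z X : Ω → ℝ) : EReal :=
  if (∫⁻ ω, ENNReal.ofReal (-(Z ω * X ω)) ∂P) = ⊤ then ⊥
  else ((∫⁻ ω, ENNReal.ofReal (Z ω * X ω) ∂P : ℝ≥0∞) : EReal)
    - ((∫⁻ ω, ENNReal.ofReal (-(Z ω * X ω)) ∂P : ℝ≥0∞) : EReal)

/-- Coherent utility function determined by a set of densities `D`. -/
noncomputable def cohU (P : Measure Ω) (D : Set (Ω → ℝ)) (X : Ω → ℝ) : EReal :=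
  ⨅ Z ∈ D, eexp P Z X

/-- The weak `L¹`-space associated with `D`. -/
def Lw (P : Measure Ω) (D : Set (Ω → ℝ)) : Set (Ω → ℝ) :=
  {X | Measurable X ∧ ⊥ < cohU P D X ∧ ⊥ < cohU P D (fun ω => -X ω)}

noncomputable def tailSup (P : Measure Ω) (D : Set (Ω → ℝ)) (X : Ω → ℝ) (n : ℕ) : ℝ≥0∞ :=
  ⨆ Z ∈ D, ∫⁻ ω in {ω | (n : ℝ) < |X ω|}, ENNReal.ofReal (Z ω * |X ω|) ∂P

/-- The strong `L¹`-space associated with `D`. -/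
def Ls (P : Measure Ω) (D : Set (Ω → ℝ)) : Set (Ω → ℝ) :=
  {X | Measurable X ∧ Tendsto (tailSup P D X) atTop (nhds 0)}

/-- Risk-neutral densities for the set `A` of attainable P&Ls. -/
def RiskNeutral (P : Measure Ω) (A : Set (Ω → ℝ)) : Set (Ω → ℝ) :=
  {Z | Z ∈ Dens P ∧ ∀ X ∈ A, eexp P Z X ≤ 0}

/-- `A` is `D`-consistent. -/
def DConsistent (P : Measure Ω) (D A : Set (Ω → ℝ)) : Prop :=
  ∃ A' ⊆ A ∩ Ls P D, D ∩ RiskNeutral P A = D ∩ RiskNeutral P A'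

/-- Sequential compactness of `D` in the weak topology `σ(L¹, L^∞)`. -/
def WSeqCompact (P : Measure Ω) (D : Set (Ω → ℝ)) : Prop :=
  ∀ Z : ℕ → Ω → ℝ, (∀ n, Z n ∈ D) → ∃ W ∈ D, ∃ φ : ℕ → ℕ, StrictMono φ ∧
    ∀ g : Ω → ℝ, Measurable g → (∃ C : ℝ, ∀ ω, |g ω| ≤ C) →
      Tendsto (fun k => ∫ ω, Z (φ k) ω * g ω ∂P) atTop (nhds (∫ ω, W ω * g ω ∂P))

/-- `D` is closed under `L¹`-convergence (within densities). -/
def L1Closed (P : Measure Ω) (D : Set (Ω → ℝ)) : Prop :=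
  ∀ Z : ℕ → Ω → ℝ, (∀ n, Z n ∈ D) → ∀ W ∈ Dens P,
    Tendsto (fun n => ∫ ω, |Z n ω - W ω| ∂P) atTop (nhds 0) → W ∈ D

/-!
Since `X` has uniformly small tails over `D`, the truncated expectations `E_Q[X 1_{|X| ≤ n}]`
converge to `E_Q[X]` uniformly in `Q ∈ D`. Each truncated expectation is weakly continuous in `Q`,
hence so is `E_Q[X]` on `D`; thus `{E_Q[X] : Q ∈ D}` is a compact set of reals and has a least
element.
-/

section Expectation

variable {P : Measure Ω} {D : Set (Ω → ℝ)} {W X Z : Ω → ℝ}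

lemma integrable_of_mem_Dens (hZ : Z ∈ Dens P) : Integrable Z P := by
  obtain ⟨hZ_meas, hZ_nonneg, hZ_mass⟩ := hZ
  refine (lintegral_ofReal_ne_top_iff_integrable hZ_meas.aestronglyMeasurable
    (ae_of_all _ hZ_nonneg)).1 ?_
  exact hZ_mass ▸ ENNReal.one_ne_top

lemma eexp_eq_integral (h : Integrable (fun ω => Z ω * X ω) P) :
    eexp P Z X = ((∫ ω, Z ω * X ω ∂P : ℝ) : EReal) := by
  have hneg : ∫⁻ ω, ENNReal.ofReal (-(Z ω * X ω)) ∂P ≠ ⊤ := h.neg.lintegral_lt_top.ne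
  have hpos : ∫⁻ ω, ENNReal.ofReal (Z ω * X ω) ∂P ≠ ⊤ := h.lintegral_lt_top.ne
  rw [eexp, if_neg hneg, integral_eq_lintegral_pos_part_sub_lintegral_neg_part h,
    EReal.coe_sub, EReal.coe_ennreal_toReal hpos, EReal.coe_ennreal_toReal hneg]

lemma measurableSet_lt_abs (hX : Measurable X) (c : ℝ) : MeasurableSet {ω | c < |X ω|} :=
  measurableSet_lt measurable_const hX.abs

lemma integrable_mul_of_integrableOn_lt_abs (hZ : Integrable Z P) (hX : Measurable X) {c : ℝ}
    (h : IntegrableOn (fun ω => Z ω * X ω) {ω | c < |X ω|} P) :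
    Integrable (fun ω => Z ω * X ω) P := by
  have hX_bound : ∀ᵐ ω ∂P.restrict {ω | c < |X ω|}ᶜ, ‖X ω‖ ≤ c := by
    filter_upwards [ae_restrict_mem (measurableSet_lt_abs hX c).compl] with ω hω
    exact not_lt.1 hω
  have hbounded : IntegrableOn (fun ω => Z ω * X ω) {ω | c < |X ω|}ᶜ P :=
    hZ.integrableOn.mul_bdd hX.aestronglyMeasurable hX_bound
  rw [← integrableOn_univ, ← union_compl_self]
  exact h.union hbounded

lemma setLIntegral_enorm_mul_le_tailSup (hZD : Z ∈ D) (hZ : 0 ≤ᵐ[P] Z) (X : Ω → ℝ) (n : ℕ) :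
    ∫⁻ ω in {ω | (n : ℝ) < |X ω|}, ‖Z ω * X ω‖ₑ ∂P ≤ tailSup P D X n := by
  have henorm : (fun ω => ‖Z ω * X ω‖ₑ) =ᵐ[P] fun ω => ENNReal.ofReal (Z ω * |X ω|) := by
    filter_upwards [hZ] with ω hω
    rw [Real.enorm_eq_ofReal_abs, abs_mul, abs_of_nonneg hω]
  rw [lintegral_congr_ae (ae_restrict_of_ae henorm)]
  exact le_iSup₂ (f := fun Z (_ : Z ∈ D) =>
    ∫⁻ ω in {ω | (n : ℝ) < |X ω|}, ENNReal.ofReal (Z ω * |X ω|) ∂P) Z hZD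

lemma integrable_mul_of_mem_Ls (hX : X ∈ Ls P D) (hZD : Z ∈ D) (hZ_nonneg : 0 ≤ᵐ[P] Z)
    (hZ : Integrable Z P) : Integrable (fun ω => Z ω * X ω) P := by
  obtain ⟨n, hn⟩ := (hX.2.eventually_lt_const ENNReal.zero_lt_top).exists
  refine integrable_mul_of_integrableOn_lt_abs (c := n) hZ hX.1 ⟨?_, ?_⟩
  · exact (hZ.aestronglyMeasurable.mul hX.1.aestronglyMeasurable).restrict
  · exact (setLIntegral_enorm_mul_le_tailSup hZD hZ_nonneg X n).trans_lt hn

lemma tendstoUniformlyOn_setIntegral_mul (hD : ∀ Z ∈ D, 0 ≤ᵐ[P] Z ∧ Integrable Z P)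
    (hX : X ∈ Ls P D) :
    TendstoUniformlyOn (fun (n : ℕ) Z => ∫ ω in {ω | (n : ℝ) < |X ω|}ᶜ, Z ω * X ω ∂P)
      (fun Z => ∫ ω, Z ω * X ω ∂P) atTop D := by
  refine EMetric.tendstoUniformlyOn_iff.2 fun ε hε => ?_
  filter_upwards [hX.2.eventually_lt_const hε] with n hn Z hZ
  have hint := integrable_mul_of_mem_Ls hX hZ (hD Z hZ).1 (hD Z hZ).2
  calc edist (∫ ω, Z ω * X ω ∂P) (∫ ω in {ω | (n : ℝ) < |X ω|}ᶜ, Z ω * X ω ∂P)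
      = ‖∫ ω in {ω | (n : ℝ) < |X ω|}, Z ω * X ω ∂P‖ₑ := by
        rw [edist_eq_enorm_sub, ← integral_add_compl (measurableSet_lt_abs hX.1 n) hint,
          add_sub_cancel_right]
    _ ≤ ∫⁻ ω in {ω | (n : ℝ) < |X ω|}, ‖Z ω * X ω‖ₑ ∂P := enorm_integral_le_lintegral_enorm _
    _ ≤ tailSup P D X n := setLIntegral_enorm_mul_le_tailSup hZ (hD Z hZ).1 X n
    _ < ε := hn

/-- Convergence in the weak topology `σ(L¹, L^∞)`, tested against everywhere bounded measurable
functions as in `WSeqCompact`. -/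
def WeakTendsto {ι : Type*} (P : Measure Ω) (Z : ι → Ω → ℝ) (l : Filter ι) (W : Ω → ℝ) : Prop :=
  ∀ g : Ω → ℝ, Measurable g → (∃ C : ℝ, ∀ ω, |g ω| ≤ C) →
    Tendsto (fun i => ∫ ω, Z i ω * g ω ∂P) l (nhds (∫ ω, W ω * g ω ∂P))

lemma WeakTendsto.tendsto_setIntegral_mul {ι : Type*} {l : Filter ι} {Z : ι → Ω → ℝ}
    (hZW : WeakTendsto P Z l W) (hX : Measurable X) (c : ℝ) :
    Tendsto (fun i => ∫ ω in {ω | c < |X ω|}ᶜ, Z i ω * X ω ∂P) l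
      (nhds (∫ ω in {ω | c < |X ω|}ᶜ, W ω * X ω ∂P)) := by
  have hS := (measurableSet_lt_abs hX c).compl
  have hbound : ∀ ω, |{ω | c < |X ω|}ᶜ.indicator X ω| ≤ |c| := fun ω => by
    by_cases hω : c < |X ω|
    · simp [hω]
    · simpa [hω] using (not_lt.1 hω).trans (le_abs_self c)
  simpa only [← indicator_mul_right, integral_indicator hS] using
    hZW _ (hX.indicator hS) ⟨|c|, hbound⟩

lemma WeakTendsto.tendsto_integral_mul {ι : Type*} {l : Filter ι} {Z : ι → Ω → ℝ}
    (hZW : WeakTendsto P Z l W) (hD : ∀ Z ∈ D, 0 ≤ᵐ[P] Z ∧ Integrable Z P) (hX : X ∈ Ls P D)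
    (hZ : ∀ i, Z i ∈ D) (hW : W ∈ D) :
    Tendsto (fun i => ∫ ω, Z i ω * X ω ∂P) l (nhds (∫ ω, W ω * X ω ∂P)) := by
  have hunif := tendstoUniformlyOn_setIntegral_mul hD hX
  have hunif_seq : TendstoUniformly
      (fun (n : ℕ) i => ∫ ω in {ω | (n : ℝ) < |X ω|}ᶜ, Z i ω * X ω ∂P)
      (fun i => ∫ ω, Z i ω * X ω ∂P) atTop :=
    tendstoUniformlyOn_univ.1 <| (hunif.comp Z).mono fun i _ => hZ i
  exact hunif_seq.tendsto_of_eventually_tendsto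
    (Eventually.of_forall fun n => hZW.tendsto_setIntegral_mul hX.1 n) (hunif.tendsto_at hW)

lemma isCompact_image_integral_mul (hD : ∀ Z ∈ D, 0 ≤ᵐ[P] Z ∧ Integrable Z P)
    (hD_compact : WSeqCompact P D) (hX : X ∈ Ls P D) :
    IsCompact ((fun Z => ∫ ω, Z ω * X ω ∂P) '' D) := by
  refine IsSeqCompact.isCompact fun u hu => ?_
  choose Z hZ hZu using hu
  obtain ⟨W, hW, φ, hφ, hZW : WeakTendsto P (Z ∘ φ) atTop W⟩ := hD_compact Z hZ
  refine ⟨_, mem_image_of_mem _ hW, φ, hφ, ?_⟩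
  obtain rfl : (fun n => ∫ ω, Z n ω * X ω ∂P) = u := funext hZu
  exact hZW.tendsto_integral_mul hD hX (fun k => hZ (φ k)) hW

end Expectation

theorem stmt_6_general (P : Measure Ω) (D : Set (Ω → ℝ))
    (hD : ∀ Z ∈ D, 0 ≤ᵐ[P] Z ∧ Integrable Z P) (hDne : D.Nonempty) (hDcomp : WSeqCompact P D)
    (X : Ω → ℝ) (hX : X ∈ Ls P D) :
    ∃ Z ∈ D, eexp P Z X = cohU P D X ∧ ⊥ < cohU P D X ∧ cohU P D X < ⊤ := by
  have heexp : ∀ Z ∈ D, eexp P Z X = ((∫ ω, Z ω * X ω ∂P : ℝ) : EReal) := fun Z hZ =>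
    eexp_eq_integral (integrable_mul_of_mem_Ls hX hZ (hD Z hZ).1 (hD Z hZ).2)
  obtain ⟨_, ⟨W, hW, rfl⟩, hW_least⟩ :=
    (isCompact_image_integral_mul hD hDcomp hX).exists_isLeast (hDne.image _)
  have hW_extreme : eexp P W X = cohU P D X := by
    refine le_antisymm (le_iInf₂ fun Z hZ => ?_) (iInf₂_le W hW)
    rw [heexp W hW, heexp Z hZ, EReal.coe_le_coe_iff]
    exact hW_least (mem_image_of_mem _ hZ)
  refine ⟨W, hW, hW_extreme, ?_⟩
  rw [← hW_extreme, heexp W hW]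
  exact ⟨EReal.bot_lt_coe _, EReal.coe_lt_top _⟩

/-- If `D ⊆ 𝒫` is weakly compact and `X ∈ L¹_s(D)`, then the set of extreme
measures `𝒳_D(X)` is nonempty: there is `Q ∈ D` with `E_Q[X] = inf_{Q' ∈ D} E_{Q'}[X] ∈ (−∞, ∞)`. -/
theorem stmt_6 (P : Measure Ω) [IsProbabilityMeasure P] (D : Set (Ω → ℝ))
    (hDsub : D ⊆ Dens P) (hDne : D.Nonempty) (hDcomp : WSeqCompact P D)
    (X : Ω → ℝ) (hX : X ∈ Ls P D) :
    ∃ Z ∈ D, eexp P Z X = cohU P D X ∧ ⊥ < cohU P D X ∧ cohU P D X < ⊤ := by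
  exact stmt_6_general P D
    (fun Z hZ => ⟨ae_of_all _ (hDsub hZ).2.1, integrable_of_mem_Dens (hDsub hZ)⟩) hDne hDcomp X hX
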